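/- arXiv:math/0507026 — 2 statements merged into one kernel-verified Lean document; each statement's English description precedes it below -/
import Mathlib

section
/- The number of set partitions of the set {1, 2, ..., 2k} equals the sum over partitions λ of size at most k of the square of the number of vacillating tableaux of shape λ and length 2k. -/
/-- A vacillating tableau of length `2k` (Γ_k indexing): a sequence of Young diagrams
starting at the empty diagram, where at each half-step at most one box is removed and at
each whole step at most one box is added; constant after position `2k`. -/
def VacSeq (k : ℕ) (f : ℕ → YoungDiagram) : Prop :=
  f 0 = ⊥ ∧
  (∀ i < k, f (2*i+1) ≤ f (2*i) ∧ (f (2*i)).card ≤ (f (2*i+1)).card + 1) ∧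
  (∀ i < k, f (2*i+1) ≤ f (2*i+2) ∧ (f (2*i+2)).card ≤ (f (2*i+1)).card + 1) ∧
  (∀ j, 2*k ≤ j → f j = f (2*k))

/-- The number of vacillating tableaux of shape `lam` and length `2k`. -/
noncomputable def mVT (k : ℕ) (lam : YoungDiagram) : ℕ :=
  Nat.card {f : ℕ → YoungDiagram // VacSeq k f ∧ f (2*k) = lam}

/-!
On the free module on Young diagrams let `U` and `D` add and remove a box in all possible ways, so
that `D U = U D + 1`. Then `x = 1 + U` and `y = 1 + D` also satisfy `y x = x y + 1`, and the number
of vacillating tableaux of shape `λ` and length `2k` is the coefficient of `λ` in `(x y)^k ∅`.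
Since `x y` is self-adjoint, the sum of the squares of these numbers is the coefficient of `∅` in
`(x y)^(2k) ∅`. Normal ordering turns `(x y)^n` into the sum of `x^|π| y^|π|` over the set
partitions `π` of an `n`-element set, and each of them contributes `1` to that coefficient because
`y` fixes `∅` and `x` preserves the coefficient of `∅`.
-/

open scoped Finset

theorem mul_mul_pow_of_mul_eq_add_one {A : Type*} [Semiring A] {x y : A}
    (h : y * x = x * y + 1) (m : ℕ) :
    x * y * x ^ m = x ^ (m + 1) * y + m • x ^ m := by
  induction m with
  | zero => simp
  | succ m ih =>
    calc x * y * x ^ (m + 1) = (x ^ (m + 1) * y + m • x ^ m) * x := by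
          rw [← ih, pow_succ, ← mul_assoc]
      _ = x ^ (m + 1) * (y * x) + m • x ^ (m + 1) := by
        rw [add_mul, smul_mul_assoc, ← pow_succ, mul_assoc]
      _ = x ^ (m + 1 + 1) * y + (m + 1) • x ^ (m + 1) := by
        rw [h, mul_add, mul_one, ← mul_assoc, ← pow_succ, add_assoc, succ_nsmul']

/-- The equivalence relation on `Option α` that restricts to `s` on `α` and whose class of `none`
is the class `o` of `s` with `none` adjoined, or the singleton of `none` if `o` is `none`. -/
def setoidExtend {α : Type*} (s : Setoid α) (o : Option (Quotient s)) : Setoid (Option α) :=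
  Setoid.ker fun a => a.elim o fun a => some (Quotient.mk s a)

section SetoidExtend

variable {α : Type*} {s : Setoid α} {o : Option (Quotient s)} {a b : α}

theorem setoidExtend_some_some : setoidExtend s o (some a) (some b) ↔ s a b := by
  rw [setoidExtend, Setoid.ker_def]
  exact Option.some_inj.trans Quotient.eq

theorem setoidExtend_none_some :
    setoidExtend s o none (some a) ↔ o = some (Quotient.mk s a) :=
  Iff.rfl

theorem exists_setoidExtend_eq (t : Setoid (Option α)) :
    ∃ (s : Setoid α) (o : Option (Quotient s)), setoidExtend s o = t := by
  obtain ⟨o, ho⟩ : ∃ o : Option (Quotient (t.comap some)),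
      ∀ a, o = some (Quotient.mk _ a) ↔ t none (some a) := by
    by_cases h : ∃ a, t none (some a)
    · obtain ⟨a, ha⟩ := h
      refine ⟨some (Quotient.mk _ a), fun b => ?_⟩
      rw [Option.some_inj, Quotient.eq]
      exact ⟨t.trans ha, t.trans (t.symm ha)⟩
    · exact ⟨none, fun a => by simpa using fun ha => h ⟨a, ha⟩⟩
  refine ⟨t.comap some, o, Setoid.ext fun a b => ?_⟩
  cases a <;> cases b
  · exact iff_of_true ((setoidExtend _ o).refl _) (t.refl _)
  · rw [setoidExtend_none_some, ho]
  · rw [Setoid.comm', setoidExtend_none_some, ho, Setoid.comm']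
  · rw [setoidExtend_some_some]
    rfl

theorem setoidExtend_bijective :
    Function.Bijective fun p : Σ s : Setoid α, Option (Quotient s) => setoidExtend p.1 p.2 := by
  constructor
  · rintro ⟨s, o⟩ ⟨s', o'⟩ h
    obtain rfl : s = s' := Setoid.ext fun a b => by
      rw [← setoidExtend_some_some (o := o), ← setoidExtend_some_some (o := o')]
      exact Setoid.ext_iff.1 h _ _
    congr 1
    refine Option.ext fun q => Quotient.inductionOn q fun a => ?_
    exact setoidExtend_none_some.symm.trans ((Setoid.ext_iff.1 h _ _).trans setoidExtend_none_some)
  · intro t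
    obtain ⟨s, o, h⟩ := exists_setoidExtend_eq t
    exact ⟨⟨s, o⟩, h⟩

theorem card_quotient_setoidExtend_none [Finite α] (s : Setoid α) :
    Nat.card (Quotient (setoidExtend s none)) = Nat.card (Quotient s) + 1 := by
  rw [setoidExtend, Nat.card_congr (Setoid.quotientKerEquivOfSurjective _ ?_), Finite.card_option]
  rintro (_ | ⟨⟨a⟩⟩)
  exacts [⟨none, rfl⟩, ⟨some a, rfl⟩]

theorem card_quotient_setoidExtend_some (s : Setoid α) (q : Quotient s) :
    Nat.card (Quotient (setoidExtend s (some q))) = Nat.card (Quotient s) := by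
  let f : Option α → Quotient s := fun a => a.elim q (Quotient.mk s)
  have hf : setoidExtend s (some q) = Setoid.ker f := Setoid.ext fun a b => by
    cases a <;> cases b <;> rw [setoidExtend, Setoid.ker_def, Setoid.ker_def] <;> simp [f]
  rw [hf]
  exact Nat.card_congr (Setoid.quotientKerEquivOfSurjective _ fun p =>
    Quotient.inductionOn p fun a => ⟨some a, rfl⟩)

end SetoidExtend

theorem sum_setoid_option {α M : Type*} [Finite α] [Fintype (Setoid α)]
    [Fintype (Setoid (Option α))] [AddCommMonoid M] (g : ℕ → M) :
    ∑ s : Setoid (Option α), g (Nat.card (Quotient s)) =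
      ∑ s : Setoid α, (g (Nat.card (Quotient s) + 1) +
        Nat.card (Quotient s) • g (Nat.card (Quotient s))) := by
  classical
  have : ∀ s : Setoid α, Fintype (Quotient s) := fun s => Fintype.ofFinite _
  rw [← (Equiv.ofBijective _ setoidExtend_bijective).sum_comp, Fintype.sum_sigma]
  refine Finset.sum_congr rfl fun s _ => ?_
  simp only [Equiv.ofBijective_apply, Fintype.sum_option, card_quotient_setoidExtend_none,
    card_quotient_setoidExtend_some, Finset.sum_const, Finset.card_univ, Nat.card_eq_fintype_card]

instance finite_setoid {α : Type*} [Finite α] : Finite (Setoid α) :=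
  Finite.of_injective (fun s : Setoid α => (s : α → α → Prop)) fun _ _ h =>
    Setoid.ext fun a b => iff_of_eq (congrFun₂ h a b)

/-- Transport of equivalence relations along a bijection of the underlying types. -/
def setoidCongr {α β : Type*} (e : α ≃ β) : Setoid α ≃ Setoid β where
  toFun := Setoid.comap e.symm
  invFun := Setoid.comap e
  left_inv s := by ext; simp [Setoid.comap_rel]
  right_inv s := by ext; simp [Setoid.comap_rel]

theorem card_quotient_setoidCongr {α β : Type*} (e : α ≃ β) (s : Setoid α) :
    Nat.card (Quotient (setoidCongr e s)) = Nat.card (Quotient s) :=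
  Nat.card_congr (Quotient.congr e.symm fun _ _ => Iff.rfl)

theorem mul_pow_eq_sum_setoid {A : Type*} [Semiring A] {x y : A} (h : y * x = x * y + 1)
    (α : Type*) [Finite α] [Fintype (Setoid α)] :
    (x * y) ^ Nat.card α =
      ∑ s : Setoid α, x ^ Nat.card (Quotient s) * y ^ Nat.card (Quotient s) := by
  -- Multiplication by `x * y` adjoins a point, either as a class of its own or to one of the `m`
  -- existing classes.
  have mul_mul_pow_mul_pow (m : ℕ) :
      x * y * (x ^ m * y ^ m) = x ^ (m + 1) * y ^ (m + 1) + m • (x ^ m * y ^ m) := by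
    rw [← mul_assoc, mul_mul_pow_of_mul_eq_add_one h, add_mul, mul_assoc, ← pow_succ',
      smul_mul_assoc]
  revert ‹Fintype (Setoid α)›
  induction α using Finite.induction_empty_option with
  | @of_equiv α β e ih =>
    intro
    let := Fintype.ofEquiv _ (setoidCongr e).symm
    simp only [← Nat.card_congr e, ih, ← (setoidCongr e).sum_comp, card_quotient_setoidCongr]
  | h_empty =>
    intro
    have hcard : Fintype.card (Setoid PEmpty) = 1 :=
      Fintype.card_eq_one_iff.2 ⟨⊥, fun s => Setoid.ext fun a => a.elim⟩
    simp [hcard]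
  | @h_option α _ ih =>
    intro
    let := Fintype.ofFinite (Setoid α)
    rw [Finite.card_option, pow_succ', ih, Finset.mul_sum,
      sum_setoid_option fun m => x ^ m * y ^ m]
    exact Finset.sum_congr rfl fun s _ => mul_mul_pow_mul_pow _

theorem card_finpartition_univ (α : Type*) [Fintype α] [DecidableEq α] :
    Nat.card (Finpartition (Finset.univ : Finset α)) = Nat.card (Setoid α) := by
  classical
  have rel_iff (P : Finpartition (Finset.univ : Finset α)) (a b : α) :
      Setoid.ker P.part a b ↔ b ∈ P.part a := by
    rw [P.mem_part_iff_part_eq_part (Finset.mem_univ _) (Finset.mem_univ _), Setoid.ker_def,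
      eq_comm]
  refine Nat.card_eq_of_bijective (fun P => Setoid.ker P.part) ⟨fun P Q h => ?_, fun s => ?_⟩
  · have hpart : P.part = Q.part := by
      ext a b
      rw [← rel_iff, ← rel_iff]
      exact Setoid.ext_iff.1 h a b
    have parts_eq (P : Finpartition (Finset.univ : Finset α)) :
        (P.parts : Set (Finset α)) = Set.range P.part := by
      rw [← (P.part_surjOn).image_eq_of_mapsTo fun a _ => P.part_mem.2 (Finset.mem_univ a),
        Finset.coe_univ, Set.image_univ]
    apply Finpartition.ext
    rw [← Finset.coe_inj, parts_eq, parts_eq, hpart]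
  · exact ⟨Finpartition.ofSetoid s, Setoid.ext fun a b =>
      (rel_iff _ a b).trans Finpartition.mem_part_ofSetoid_iff_rel⟩

section Transfer

variable (R : Type*) [Semiring R] {P : Type*}

/-- The linear operator on the free module on `P` that sends a basis vector `x` to the sum of
the basis vectors in `s x`. -/
noncomputable def transfer (s : P → Finset P) : Module.End R (P →₀ R) :=
  Finsupp.linearCombination R fun x => ∑ y ∈ s x, Finsupp.single y 1

variable {R}

theorem transfer_single (s : P → Finset P) (x : P) :
    transfer R s (Finsupp.single x 1) = ∑ y ∈ s x, Finsupp.single y 1 := by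
  rw [transfer, Finsupp.linearCombination_single, one_smul]

theorem transfer_apply {s t : P → Finset P} (hst : ∀ x y, y ∈ s x ↔ x ∈ t y) (f : P →₀ R)
    (y : P) : transfer R s f y = ∑ x ∈ t y, f x := by
  classical
  induction f using Finsupp.induction_linear with
  | zero => simp
  | add f g hf hg => simp only [map_add, Finsupp.add_apply, hf, hg, Finset.sum_add_distrib]
  | single x r =>
    rw [← mul_one r, ← smul_eq_mul, ← Finsupp.smul_single, map_smul, transfer_single]
    simp only [Finsupp.smul_apply, Finsupp.finsetSum_apply, Finsupp.single_apply,
      ← Finset.smul_sum, Finset.sum_ite_eq', Finset.sum_ite_eq, hst]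

theorem transfer_transfer_single_apply [DecidableEq P] {s t : P → Finset P}
    (hst : ∀ x y, y ∈ s x ↔ x ∈ t y) (u : P → Finset P) (x y : P) :
    transfer R s (transfer R u (Finsupp.single x 1)) y = #(t y ∩ u x) := by
  simp only [transfer_apply hst, transfer_single, Finsupp.finsetSum_apply, Finsupp.single_apply,
    Finset.sum_ite_eq', Finset.sum_boole, Finset.filter_mem_eq_inter]

end Transfer

section DotForm

variable (R : Type*) [CommSemiring R] {P : Type*}

/-- The symmetric bilinear form on the free module on `P` for which the basis `P` is
orthonormal. -/
noncomputable def dotForm : (P →₀ R) →ₗ[R] (P →₀ R) →ₗ[R] R :=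
  Finsupp.linearCombination R Finsupp.lapply

variable {R}

theorem dotForm_single (x : P) (r : R) (g : P →₀ R) :
    dotForm R (Finsupp.single x r) g = r * g x := by
  simp [dotForm]

theorem dotForm_apply (f g : P →₀ R) : dotForm R f g = f.sum fun x r => r * g x := by
  simp [dotForm, Finsupp.linearCombination_apply, Finsupp.sum, LinearMap.sum_apply]

theorem isAdjointPair_transfer {s t : P → Finset P} (hst : ∀ x y, y ∈ s x ↔ x ∈ t y) :
    LinearMap.IsAdjointPair (dotForm R) (dotForm R) (transfer R s) (transfer R t) := by
  intro f g
  induction f using Finsupp.induction_linear with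
  | zero => simp
  | add f f' hf hf' => simp only [map_add, LinearMap.add_apply, hf, hf']
  | single x r =>
    rw [← mul_one r, ← smul_eq_mul, ← Finsupp.smul_single]
    simp only [map_smul, LinearMap.smul_apply]
    rw [transfer_single, map_sum, LinearMap.sum_apply, dotForm_single, one_mul,
      transfer_apply fun y x => (hst x y).symm]
    simp only [dotForm_single, one_mul]

end DotForm

theorem isAdjointPair_pow {R M : Type*} [CommSemiring R] [AddCommMonoid M] [Module R M]
    {B : M →ₗ[R] M →ₗ[R] R} {f g : Module.End R M} (h : LinearMap.IsAdjointPair B B f g) (n : ℕ) :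
    LinearMap.IsAdjointPair B B ⇑(f ^ n) ⇑(g ^ n) := by
  induction n with
  | zero => exact LinearMap.isAdjointPair_one
  | succ n ih =>
    rw [pow_succ, pow_succ']
    exact ih.mul h

section Walks

variable {Y : Type*} {pred : ℕ → Y → Finset Y} {a b : Y} {n : ℕ}

/-- Walks of length `n` from `a` whose step from time `i` to time `i + 1` ends at `y` only if it
starts in `pred i y`. They are encoded as infinite sequences that stay constant after time `n`. -/
def IsWalk (pred : ℕ → Y → Finset Y) (a : Y) (n : ℕ) (f : ℕ → Y) : Prop :=
  f 0 = a ∧ (∀ i < n, f i ∈ pred i (f (i + 1))) ∧ ∀ j, n ≤ j → f j = f n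

theorem IsWalk.extend {f : ℕ → Y} (hf : IsWalk pred a n f) (hb : f n ∈ pred n b) :
    IsWalk pred a (n + 1) fun j => if j ≤ n then f j else b := by
  refine ⟨by simpa using hf.1, fun i hi => ?_, fun j hj => ?_⟩
  · obtain rfl | hi := (Nat.lt_succ_iff.1 hi).eq_or_lt
    · simpa using hb
    · simpa [hi.le, Nat.succ_le_iff.2 hi] using hf.2.1 i hi
  · simp [show ¬ j ≤ n by lia]

theorem IsWalk.truncate {f : ℕ → Y} (hf : IsWalk pred a (n + 1) f) :
    IsWalk pred a n fun j => f (min j n) := by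
  refine ⟨by simpa using hf.1, fun i hi => ?_, fun j hj => by simp [hj]⟩
  simpa [hi.le, Nat.succ_le_iff.2 hi] using hf.2.1 i (hi.trans n.lt_succ_self)

theorem sigma_walk_ext {s : Finset Y} {p q : Σ c : s, {f // IsWalk pred a n f ∧ f n = c}}
    (h : p.2.1 = q.2.1) : p = q := by
  obtain ⟨⟨c, _⟩, f, _, hc : f n = c⟩ := p
  obtain ⟨⟨d, _⟩, g, _, hd : g n = d⟩ := q
  obtain rfl : f = g := h
  obtain rfl := hc
  obtain rfl := hd
  rfl

/-- A walk of length `n + 1` to `b` is a walk of length `n` to a predecessor of `b`. -/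
def walkSuccEquiv (pred : ℕ → Y → Finset Y) (a : Y) (n : ℕ) (b : Y) :
    {f // IsWalk pred a (n + 1) f ∧ f (n + 1) = b} ≃
      Σ c : pred n b, {f // IsWalk pred a n f ∧ f n = c} where
  toFun f := ⟨⟨f.1 n, by simpa only [f.2.2] using f.2.1.2.1 n n.lt_succ_self⟩,
    fun j => f.1 (min j n), f.2.1.truncate, by simp⟩
  invFun p := ⟨fun j => if j ≤ n then p.2.1 j else b,
    p.2.2.1.extend (by simp only [p.2.2.2, p.1.2]), by simp⟩
  left_inv := by
    rintro ⟨f, hf, rfl⟩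
    refine Subtype.ext (funext fun j => ?_)
    obtain hj | hj := le_or_gt j n
    · simp [hj]
    · simp [hj.not_ge, hf.2.2 j hj]
  right_inv := by
    rintro ⟨c, f, hf, hc⟩
    refine sigma_walk_ext (funext fun j => ?_)
    obtain hj | hj := le_total j n
    · simp [hj]
    · simp [hj, hf.2.2 j hj]

theorem subsingleton_walk_zero (pred : ℕ → Y → Finset Y) (a b : Y) :
    Subsingleton {f // IsWalk pred a 0 f ∧ f 0 = b} :=
  ⟨fun f g => Subtype.ext (funext fun j => by
    rw [f.2.1.2.2 j j.zero_le, g.2.1.2.2 j j.zero_le, f.2.2, g.2.2])⟩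

theorem card_walk_zero [DecidableEq Y] (pred : ℕ → Y → Finset Y) (a b : Y) :
    Nat.card {f // IsWalk pred a 0 f ∧ f 0 = b} = if a = b then 1 else 0 := by
  have := subsingleton_walk_zero pred a b
  split_ifs with h
  · exact Nat.card_eq_one_iff_unique.2
      ⟨this, ⟨⟨fun _ => b, ⟨h.symm, by simp, by simp⟩, rfl⟩⟩⟩
  · have : IsEmpty {f // IsWalk pred a 0 f ∧ f 0 = b} := ⟨fun f => h (f.2.1.1.symm.trans f.2.2)⟩
    exact Nat.card_of_isEmpty

theorem finite_walk (pred : ℕ → Y → Finset Y) (a : Y) (n : ℕ) (b : Y) :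
    Finite {f // IsWalk pred a n f ∧ f n = b} := by
  induction n generalizing b with
  | zero => exact @Finite.of_subsingleton _ (subsingleton_walk_zero pred a b)
  | succ n ih => exact Finite.of_equiv _ (walkSuccEquiv pred a n b).symm

theorem card_walk_succ (pred : ℕ → Y → Finset Y) (a : Y) (n : ℕ) (b : Y) :
    Nat.card {f // IsWalk pred a (n + 1) f ∧ f (n + 1) = b} =
      ∑ c ∈ pred n b, Nat.card {f // IsWalk pred a n f ∧ f n = c} := by
  have := finite_walk pred a n
  rw [Nat.card_congr (walkSuccEquiv pred a n b), Nat.card_sigma]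
  exact Finset.sum_coe_sort (pred n b) fun c => Nat.card {f // IsWalk pred a n f ∧ f n = c}

end Walks

instance decidableEqYoungDiagram : DecidableEq YoungDiagram :=
  fun μ ν => decidable_of_iff (μ.cells = ν.cells) YoungDiagram.ext_iff.symm

section YoungDiagrams

variable {μ ν κ : YoungDiagram} {c : ℕ × ℕ}

/-- The boxes of `μ` whose removal leaves a Young diagram. -/
def corners (μ : YoungDiagram) : Set (ℕ × ℕ) :=
  {c | Maximal (· ∈ μ) c}

/-- The boxes whose addition to `μ` yields a Young diagram. -/
def outerCorners (μ : YoungDiagram) : Set (ℕ × ℕ) :=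
  {c | Minimal (· ∉ μ) c}

theorem mem_corners_iff :
    c ∈ corners μ ↔ c.2 + 1 = μ.rowLen c.1 ∧ μ.rowLen (c.1 + 1) < μ.rowLen c.1 := by
  obtain ⟨i, j⟩ := c
  simp only [corners, Set.mem_ofPred_eq, Maximal, Prod.forall, YoungDiagram.mem_iff_lt_rowLen,
    Prod.mk_le_mk]
  constructor
  · rintro ⟨hj, hmax⟩
    have hright := hmax i (j + 1)
    have hdown := hmax (i + 1) j
    lia
  · rintro ⟨hj, hlt⟩
    refine ⟨by lia, fun i' j' hj' hle => ?_⟩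
    obtain rfl | hi := hle.1.eq_or_lt
    · lia
    · have := μ.rowLen_anti (i + 1) i' hi
      lia

theorem mem_outerCorners_iff :
    c ∈ outerCorners μ ↔
      c.2 = μ.rowLen c.1 ∧ ∀ i, c.1 = i + 1 → μ.rowLen (i + 1) < μ.rowLen i := by
  obtain ⟨i, j⟩ := c
  simp only [outerCorners, Set.mem_ofPred_eq, Minimal, Prod.forall, YoungDiagram.mem_iff_lt_rowLen,
    Prod.mk_le_mk, not_lt]
  constructor
  · rintro ⟨hj, hmin⟩
    refine ⟨?_, ?_⟩
    · have hleft := hmin i (μ.rowLen i)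
      lia
    · rintro i rfl
      have hup := hmin i j
      lia
  · rintro ⟨rfl, hlt⟩
    refine ⟨le_rfl, fun i' j' hj' hle => ?_⟩
    obtain rfl | hi := hle.1.eq_or_lt
    · lia
    · obtain ⟨i, rfl⟩ := Nat.exists_eq_add_one_of_ne_zero (Nat.ne_zero_of_lt hi)
      have := μ.rowLen_anti i' i (Nat.lt_succ_iff.1 hi)
      have := hlt i rfl
      lia

theorem outerCorners_eq (μ : YoungDiagram) :
    outerCorners μ =
      insert (0, μ.rowLen 0) ((fun c => (c.1 + 1, μ.rowLen (c.1 + 1))) '' corners μ) := by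
  ext ⟨i, j⟩
  cases i with
  | zero => simp [mem_outerCorners_iff]
  | succ i =>
    rw [mem_outerCorners_iff, Set.mem_insert_iff, Set.mem_image]
    constructor
    · rintro ⟨hj : j = μ.rowLen (i + 1), hlt⟩
      obtain rfl := hj
      have hlt := hlt i rfl
      exact Or.inr ⟨(i, μ.rowLen i - 1), mem_corners_iff.2 ⟨by lia, hlt⟩, rfl⟩
    · rintro (h | ⟨⟨i', j'⟩, hc, h⟩)
      · simp at h
      · obtain ⟨rfl, rfl⟩ : i' = i ∧ μ.rowLen (i' + 1) = j := by simpa using h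
        refine ⟨rfl, ?_⟩
        rintro _ ⟨⟩
        exact (mem_corners_iff.1 hc).2

theorem finite_corners (μ : YoungDiagram) : (corners μ).Finite :=
  μ.cells.finite_toSet.subset fun _ hc => hc.prop

theorem injOn_corners : (corners μ).InjOn fun c => (c.1 + 1, μ.rowLen (c.1 + 1)) := by
  intro c hc d hd h
  have := mem_corners_iff.1 hc
  have := mem_corners_iff.1 hd
  grind

theorem finite_outerCorners (μ : YoungDiagram) : (outerCorners μ).Finite := by
  rw [outerCorners_eq]
  exact ((finite_corners μ).image _).insert _

theorem ncard_outerCorners (μ : YoungDiagram) :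
    (outerCorners μ).ncard = (corners μ).ncard + 1 := by
  rw [outerCorners_eq, Set.ncard_insert_of_notMem (by simp) ((finite_corners μ).image _),
    injOn_corners.ncard_image]

theorem isLowerSet_insert_iff (hc : c ∉ μ) :
    IsLowerSet (↑(insert c μ.cells) : Set (ℕ × ℕ)) ↔ c ∈ outerCorners μ := by
  rw [Finset.coe_insert]
  constructor
  · refine fun h => ⟨hc, fun d hd hdc => ?_⟩
    exact ((h hdc (Set.mem_insert _ _)).resolve_right hd).ge
  · rintro h d e hed (rfl | hd)
    · by_cases he : e ∈ μ
      · exact Or.inr he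
      · exact Or.inl (hed.antisymm (h.2 he hed))
    · exact Or.inr (μ.isLowerSet hed hd)

theorem isLowerSet_erase_iff (hc : c ∈ μ) :
    IsLowerSet (↑(μ.cells.erase c) : Set (ℕ × ℕ)) ↔ c ∈ corners μ := by
  rw [Finset.coe_erase]
  constructor
  · refine fun h => ⟨hc, fun d hd hcd => ?_⟩
    by_contra hdc
    exact (h hcd ⟨hd, fun heq => hdc heq.le⟩).2 rfl
  · exact fun h => μ.isLowerSet.erase fun d hd hcd => (h.2 hd hcd).antisymm hcd

theorem image_cells_upper (μ : YoungDiagram) :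
    YoungDiagram.cells '' {ν | μ ≤ ν ∧ ν.card = μ.card + 1} =
      (insert · μ.cells) '' outerCorners μ := by
  ext t
  constructor
  · rintro ⟨ν, ⟨hle, hcard⟩, rfl⟩
    obtain ⟨c, hc, hins⟩ := Finset.exists_eq_insert_iff.2
      ⟨YoungDiagram.cells_subset_iff.2 hle, hcard.symm⟩
    refine ⟨c, (isLowerSet_insert_iff hc).1 ?_, hins⟩
    exact hins ▸ ν.isLowerSet
  · rintro ⟨c, hc, rfl⟩
    refine ⟨⟨insert c μ.cells, (isLowerSet_insert_iff hc.1).2 hc⟩, ⟨?_, ?_⟩, rfl⟩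
    · exact Finset.subset_insert _ _
    · exact Finset.card_insert_of_notMem hc.1

theorem image_cells_lower (μ : YoungDiagram) :
    YoungDiagram.cells '' {ν | ν ≤ μ ∧ μ.card = ν.card + 1} =
      (μ.cells.erase ·) '' corners μ := by
  ext t
  constructor
  · rintro ⟨ν, ⟨hle, hcard⟩, rfl⟩
    obtain ⟨c, hc, hins⟩ := Finset.exists_eq_insert_iff.2
      ⟨YoungDiagram.cells_subset_iff.2 hle, hcard.symm⟩
    have herase : μ.cells.erase c = ν.cells := by rw [← hins, Finset.erase_insert hc]
    have hcμ : c ∈ μ.cells := hins ▸ Finset.mem_insert_self _ _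
    refine ⟨c, (isLowerSet_erase_iff hcμ).1 ?_, herase⟩
    exact herase ▸ ν.isLowerSet
  · rintro ⟨c, hc, rfl⟩
    refine ⟨⟨μ.cells.erase c, (isLowerSet_erase_iff hc.1).2 hc⟩, ⟨?_, ?_⟩, rfl⟩
    · exact Finset.erase_subset _ _
    · exact (Finset.card_erase_add_one hc.1).symm

theorem youngDiagram_cells_injective : Function.Injective YoungDiagram.cells :=
  fun _ _ => YoungDiagram.ext

theorem finite_upper (μ : YoungDiagram) : {ν | μ ≤ ν ∧ ν.card = μ.card + 1}.Finite :=
  .of_finite_image (image_cells_upper μ ▸ (finite_outerCorners μ).image _)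
    youngDiagram_cells_injective.injOn

theorem finite_lower (μ : YoungDiagram) : {ν | ν ≤ μ ∧ μ.card = ν.card + 1}.Finite :=
  .of_finite_image (image_cells_lower μ ▸ (finite_corners μ).image _)
    youngDiagram_cells_injective.injOn

/-- The Young diagrams obtained from `μ` by adding one box. -/
noncomputable def upNeighbors (μ : YoungDiagram) : Finset YoungDiagram :=
  (finite_upper μ).toFinset

/-- The Young diagrams obtained from `μ` by removing one box. -/
noncomputable def downNeighbors (μ : YoungDiagram) : Finset YoungDiagram :=
  (finite_lower μ).toFinset

theorem mem_upNeighbors : ν ∈ upNeighbors μ ↔ μ ≤ ν ∧ ν.card = μ.card + 1 := by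
  simp [upNeighbors]

theorem mem_downNeighbors : ν ∈ downNeighbors μ ↔ ν ≤ μ ∧ μ.card = ν.card + 1 := by
  simp [downNeighbors]

theorem mem_upNeighbors_comm : ν ∈ upNeighbors μ ↔ μ ∈ downNeighbors ν := by
  rw [mem_upNeighbors, mem_downNeighbors]

theorem self_notMem_upNeighbors (μ : YoungDiagram) : μ ∉ upNeighbors μ := by
  simp [mem_upNeighbors]

theorem self_notMem_downNeighbors (μ : YoungDiagram) : μ ∉ downNeighbors μ := by
  simp [mem_downNeighbors]

theorem downNeighbors_bot : downNeighbors ⊥ = ∅ := by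
  refine Finset.eq_empty_of_forall_notMem fun ν hν => ?_
  have hcard := (mem_downNeighbors.1 hν).2
  simp [YoungDiagram.card] at hcard

theorem card_upNeighbors_eq_ncard (μ : YoungDiagram) :
    #(upNeighbors μ) = (outerCorners μ).ncard := by
  rw [upNeighbors, ← Set.ncard_eq_toFinset_card _ _,
    ← Set.ncard_image_of_injective _ youngDiagram_cells_injective, image_cells_upper,
    Set.InjOn.ncard_image]
  exact fun c hc d _ h => (Finset.insert_inj hc.1).1 h

theorem card_downNeighbors_eq_ncard (μ : YoungDiagram) :
    #(downNeighbors μ) = (corners μ).ncard := by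
  rw [downNeighbors, ← Set.ncard_eq_toFinset_card _ _,
    ← Set.ncard_image_of_injective _ youngDiagram_cells_injective, image_cells_lower,
    Set.InjOn.ncard_image]
  exact μ.cells.erase_injOn.mono fun c hc => hc.1

theorem card_upNeighbors_eq_card_downNeighbors_add_one (μ : YoungDiagram) :
    #(upNeighbors μ) = #(downNeighbors μ) + 1 := by
  rw [card_upNeighbors_eq_ncard, card_downNeighbors_eq_ncard, ncard_outerCorners]

theorem youngDiagram_card_sup_add_card_inf (μ ν : YoungDiagram) :
    (μ ⊔ ν).card + (μ ⊓ ν).card = μ.card + ν.card :=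
  Finset.card_union_add_card_inter _ _

theorem youngDiagram_eq_of_le_of_card_le (h : μ ≤ ν) (hcard : ν.card ≤ μ.card) : μ = ν :=
  YoungDiagram.ext (Finset.eq_of_subset_of_card_le h hcard)

theorem eq_sup_of_mem_upNeighbors (h : μ ≠ ν) (hμ : κ ∈ upNeighbors μ)
    (hν : κ ∈ upNeighbors ν) : κ = μ ⊔ ν := by
  rw [mem_upNeighbors] at hμ hν
  refine (youngDiagram_eq_of_le_of_card_le (sup_le hμ.1 hν.1) ?_).symm
  by_contra! hlt
  have hsup : μ = μ ⊔ ν := youngDiagram_eq_of_le_of_card_le le_sup_left (by lia)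
  exact h (youngDiagram_eq_of_le_of_card_le (left_eq_sup.1 hsup) (by lia)).symm

theorem eq_inf_of_mem_downNeighbors (h : μ ≠ ν) (hμ : κ ∈ downNeighbors μ)
    (hν : κ ∈ downNeighbors ν) : κ = μ ⊓ ν := by
  rw [mem_downNeighbors] at hμ hν
  refine youngDiagram_eq_of_le_of_card_le (le_inf hμ.1 hν.1) ?_
  by_contra! hlt
  have hinf : μ ⊓ ν = μ := youngDiagram_eq_of_le_of_card_le inf_le_left (by lia)
  exact h (youngDiagram_eq_of_le_of_card_le (inf_eq_left.1 hinf) (by lia))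

theorem card_upNeighbors_inter_of_ne (h : μ ≠ ν) :
    #(upNeighbors μ ∩ upNeighbors ν) = #(downNeighbors μ ∩ downNeighbors ν) := by
  have hcard := youngDiagram_card_sup_add_card_inf μ ν
  refine Finset.card_nbij' (fun _ => μ ⊓ ν) (fun _ => μ ⊔ ν) (fun κ hκ => ?_) (fun κ hκ => ?_)
    (fun κ hκ => ?_) (fun κ hκ => ?_) <;>
    obtain ⟨hμ, hν⟩ := Finset.mem_inter.1 hκ
  · obtain rfl := eq_sup_of_mem_upNeighbors h hμ hν
    rw [mem_upNeighbors] at hμ hν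
    simp only [Finset.coe_inter, Set.mem_inter_iff, Finset.mem_coe, mem_downNeighbors,
      inf_le_left, inf_le_right, true_and]
    lia
  · obtain rfl := eq_inf_of_mem_downNeighbors h hμ hν
    rw [mem_downNeighbors] at hμ hν
    simp only [Finset.coe_inter, Set.mem_inter_iff, Finset.mem_coe, mem_upNeighbors,
      le_sup_left, le_sup_right, true_and]
    lia
  · exact (eq_sup_of_mem_upNeighbors h hμ hν).symm
  · exact (eq_inf_of_mem_downNeighbors h hμ hν).symm

theorem card_upNeighbors_inter (μ ν : YoungDiagram) :
    #(upNeighbors μ ∩ upNeighbors ν) =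
      #(downNeighbors μ ∩ downNeighbors ν) + if μ = ν then 1 else 0 := by
  split_ifs with h
  · rw [h, Finset.inter_self, Finset.inter_self, card_upNeighbors_eq_card_downNeighbors_add_one]
  · rw [card_upNeighbors_inter_of_ne h, add_zero]

end YoungDiagrams

section BoxOperators

variable (R : Type*) [Semiring R]

/-- The operator sending a Young diagram to the sum of the diagrams with one more box. -/
noncomputable def addBox : Module.End R (YoungDiagram →₀ R) :=
  transfer R upNeighbors

/-- The operator sending a Young diagram to the sum of the diagrams with one box fewer. -/
noncomputable def removeBox : Module.End R (YoungDiagram →₀ R) :=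
  transfer R downNeighbors

/-- The two half-steps of a vacillating tableau combined: `1 + removeBox` removes at most one box,
then `1 + addBox` adds at most one. -/
noncomputable def vacStep : Module.End R (YoungDiagram →₀ R) :=
  (1 + addBox R) * (1 + removeBox R)

theorem removeBox_mul_addBox : removeBox R * addBox R = addBox R * removeBox R + 1 := by
  refine Finsupp.lhom_ext' fun κ => LinearMap.ext_ring (Finsupp.ext fun ν => ?_)
  have hup : removeBox R (addBox R (Finsupp.single κ 1)) ν =
      #(upNeighbors ν ∩ upNeighbors κ) :=
    transfer_transfer_single_apply (fun _ _ => mem_upNeighbors_comm.symm) _ _ _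
  have hdown : addBox R (removeBox R (Finsupp.single κ 1)) ν =
      #(downNeighbors ν ∩ downNeighbors κ) :=
    transfer_transfer_single_apply (fun _ _ => mem_upNeighbors_comm) _ _ _
  simp only [LinearMap.comp_apply, Finsupp.lsingle_apply, Module.End.mul_apply,
    LinearMap.add_apply, Finsupp.add_apply, Module.End.one_apply, hup, hdown,
    card_upNeighbors_inter, Finsupp.single_apply, Nat.cast_add, Nat.cast_ite, Nat.cast_one,
    Nat.cast_zero, eq_comm (a := ν)]

theorem one_add_removeBox_mul_one_add_addBox :
    (1 + removeBox R) * (1 + addBox R) = (1 + addBox R) * (1 + removeBox R) + 1 := by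
  simp only [add_mul, mul_add, one_mul, mul_one, removeBox_mul_addBox]
  abel

variable {R}

theorem one_add_addBox_apply (f : YoungDiagram →₀ R) (μ : YoungDiagram) :
    (1 + addBox R) f μ = ∑ ν ∈ insert μ (downNeighbors μ), f ν := by
  rw [Finset.sum_insert (self_notMem_downNeighbors μ),
    ← transfer_apply fun _ _ => mem_upNeighbors_comm]
  rfl

theorem one_add_removeBox_apply (f : YoungDiagram →₀ R) (μ : YoungDiagram) :
    (1 + removeBox R) f μ = ∑ ν ∈ insert μ (upNeighbors μ), f ν := by
  rw [Finset.sum_insert (self_notMem_upNeighbors μ),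
    ← transfer_apply fun _ _ => mem_upNeighbors_comm.symm]
  rfl

theorem one_add_removeBox_pow_bot (n : ℕ) :
    ((1 + removeBox R) ^ n) (Finsupp.single ⊥ 1) = Finsupp.single ⊥ 1 := by
  have hfix : (1 + removeBox R) (Finsupp.single ⊥ 1) = Finsupp.single ⊥ 1 := by
    rw [LinearMap.add_apply, removeBox, transfer_single, downNeighbors_bot, Finset.sum_empty,
      add_zero, Module.End.one_apply]
  rw [Module.End.pow_apply]
  exact Function.iterate_fixed hfix n

theorem one_add_addBox_pow_apply_bot (n : ℕ) (f : YoungDiagram →₀ R) :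
    ((1 + addBox R) ^ n) f ⊥ = f ⊥ := by
  induction n generalizing f with
  | zero => rfl
  | succ n ih =>
    rw [pow_succ, Module.End.mul_apply, ih, one_add_addBox_apply, downNeighbors_bot,
      insert_empty_eq, Finset.sum_singleton]

theorem vacStep_pow_card_bot (α : Type*) [Finite α] :
    (vacStep R ^ Nat.card α) (Finsupp.single ⊥ 1) ⊥ = Nat.card (Setoid α) := by
  let := Fintype.ofFinite (Setoid α)
  simp only [vacStep, mul_pow_eq_sum_setoid (one_add_removeBox_mul_one_add_addBox R) α,
    LinearMap.sum_apply, Module.End.mul_apply, one_add_removeBox_pow_bot, Finsupp.finsetSum_apply,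
    one_add_addBox_pow_apply_bot, Finsupp.single_eq_same, Finset.sum_const, Finset.card_univ,
    nsmul_one, Nat.card_eq_fintype_card]

end BoxOperators

theorem isAdjointPair_vacStep (R : Type*) [CommSemiring R] :
    LinearMap.IsAdjointPair (dotForm R) (dotForm R) (vacStep R) (vacStep R) := by
  have hadj : LinearMap.IsAdjointPair (dotForm R) (dotForm R) (addBox R) (removeBox R) :=
    isAdjointPair_transfer fun _ _ => mem_upNeighbors_comm
  have hadj' : LinearMap.IsAdjointPair (dotForm R) (dotForm R) (removeBox R) (addBox R) :=
    isAdjointPair_transfer fun _ _ => mem_upNeighbors_comm.symm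
  exact (LinearMap.isAdjointPair_one.add hadj).mul (LinearMap.isAdjointPair_one.add hadj')

/-- The diagrams at time `i` from which a vacillating tableau can step to `μ` at time `i + 1`;
boxes are removed in the steps starting at even times. -/
noncomputable def vacPred (i : ℕ) (μ : YoungDiagram) : Finset YoungDiagram :=
  if Even i then insert μ (upNeighbors μ) else insert μ (downNeighbors μ)

theorem vacPred_two_mul (i : ℕ) (μ : YoungDiagram) :
    vacPred (2 * i) μ = insert μ (upNeighbors μ) :=
  if_pos (even_two_mul i)

theorem vacPred_two_mul_add_one (i : ℕ) (μ : YoungDiagram) :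
    vacPred (2 * i + 1) μ = insert μ (downNeighbors μ) :=
  if_neg (Nat.not_even_two_mul_add_one i)

theorem mem_insert_upNeighbors {μ ν : YoungDiagram} :
    ν ∈ insert μ (upNeighbors μ) ↔ μ ≤ ν ∧ ν.card ≤ μ.card + 1 := by
  rw [Finset.mem_insert, mem_upNeighbors]
  constructor
  · rintro (rfl | ⟨hle, hcard⟩)
    exacts [⟨le_rfl, Nat.le_succ _⟩, ⟨hle, hcard.le⟩]
  · rintro ⟨hle, hcard⟩
    obtain h | h := hcard.lt_or_eq
    · exact Or.inl (youngDiagram_eq_of_le_of_card_le hle (Nat.lt_succ_iff.1 h)).symm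
    · exact Or.inr ⟨hle, h⟩

theorem mem_insert_downNeighbors {μ ν : YoungDiagram} :
    ν ∈ insert μ (downNeighbors μ) ↔ ν ≤ μ ∧ μ.card ≤ ν.card + 1 := by
  rw [← mem_insert_upNeighbors, Finset.mem_insert, Finset.mem_insert, mem_upNeighbors_comm,
    eq_comm]

theorem vacSeq_iff_isWalk {k : ℕ} {f : ℕ → YoungDiagram} :
    VacSeq k f ↔ IsWalk vacPred ⊥ (2 * k) f := by
  have hsteps {p : ℕ → Prop} :
      (∀ i < 2 * k, p i) ↔ (∀ i < k, p (2 * i)) ∧ ∀ i < k, p (2 * i + 1) := by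
    refine ⟨fun h => ⟨fun i hi => h _ (by lia), fun i hi => h _ (by lia)⟩, fun h i hi => ?_⟩
    obtain ⟨j, rfl | rfl⟩ := i.even_or_odd'
    exacts [h.1 j (by lia), h.2 j (by lia)]
  simp only [VacSeq, IsWalk, hsteps, vacPred_two_mul, vacPred_two_mul_add_one,
    mem_insert_upNeighbors, mem_insert_downNeighbors, and_assoc]

theorem mVT_eq_card_walk (k : ℕ) (μ : YoungDiagram) :
    mVT k μ = Nat.card {f // IsWalk vacPred ⊥ (2 * k) f ∧ f (2 * k) = μ} := by
  simp only [mVT, vacSeq_iff_isWalk]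

theorem mVT_zero (μ : YoungDiagram) : mVT 0 μ = if ⊥ = μ then 1 else 0 := by
  rw [mVT_eq_card_walk]
  exact card_walk_zero vacPred ⊥ μ

theorem mVT_succ (k : ℕ) (κ : YoungDiagram) :
    mVT (k + 1) κ =
      ∑ μ ∈ insert κ (downNeighbors κ), ∑ ν ∈ insert μ (upNeighbors μ), mVT k ν := by
  simp only [mVT_eq_card_walk, Nat.mul_succ, card_walk_succ, vacPred_two_mul,
    vacPred_two_mul_add_one]

theorem mVT_eq_vacStep_pow (k : ℕ) (μ : YoungDiagram) :
    mVT k μ = (vacStep ℕ ^ k) (Finsupp.single ⊥ 1) μ := by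
  induction k generalizing μ with
  | zero => rw [mVT_zero, pow_zero, Module.End.one_apply, Finsupp.single_apply]
  | succ k ih =>
    simp only [pow_succ', Module.End.mul_apply, vacStep, one_add_addBox_apply,
      one_add_removeBox_apply, mVT_succ, ih]

theorem VacSeq.card_le {k : ℕ} {f : ℕ → YoungDiagram} (hf : VacSeq k f) {i : ℕ} (hi : i ≤ k) :
    (f (2 * i)).card ≤ i := by
  induction i with
  | zero => simp [hf.1]
  | succ i ih =>
    have hdown := Finset.card_le_card (hf.2.1 i hi).1
    have hup := (hf.2.2.1 i hi).2
    have := ih (Nat.le_of_succ_le hi)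
    rw [Nat.mul_succ]
    lia

theorem card_le_of_mVT_ne_zero {k : ℕ} {μ : YoungDiagram} (h : mVT k μ ≠ 0) : μ.card ≤ k := by
  obtain ⟨⟨f, hf, rfl⟩⟩ := (Nat.card_ne_zero.1 h).1
  exact hf.card_le le_rfl

/-- The number of set partitions of a `2k`-element set equals the sum, over partitions
`λ` of size at most `k`, of the square of the number of vacillating tableaux of shape
`λ` and length `2k`. -/
theorem bell_eq_sum_sq_vacillating (k : ℕ) :
    Nat.card (Finpartition (Finset.univ : Finset (Fin (2*k)))) =
      ∑ᶠ lam ∈ {lam : YoungDiagram | lam.card ≤ k}, (mVT k lam)^2 := by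
  let v : YoungDiagram →₀ ℕ := (vacStep ℕ ^ k) (Finsupp.single ⊥ 1)
  have hv (μ : YoungDiagram) : mVT k μ = v μ := mVT_eq_vacStep_pow k μ
  have hsupp : ∀ μ, v μ ≠ 0 → μ.card ≤ k := fun μ hμ =>
    card_le_of_mVT_ne_zero ((hv μ).trans_ne hμ)
  symm
  calc ∑ᶠ μ ∈ {μ : YoungDiagram | μ.card ≤ k}, mVT k μ ^ 2
      = ∑ μ ∈ v.support, v μ * v μ := by
        simp only [hv, sq]
        refine finsum_mem_eq_sum_of_inter_support_eq _ (Set.ext fun μ => ?_)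
        simpa using hsupp μ
    _ = dotForm ℕ v v := (dotForm_apply v v).symm
    _ = (vacStep ℕ ^ (k + k)) (Finsupp.single ⊥ 1) ⊥ := by
        rw [isAdjointPair_pow (isAdjointPair_vacStep ℕ) k, dotForm_single, one_mul, pow_add,
          Module.End.mul_apply]
    _ = Nat.card (Setoid (Fin (2 * k))) := by
        simpa [two_mul] using vacStep_pow_card_bot (R := ℕ) (Fin (2 * k))
    _ = Nat.card (Finpartition (Finset.univ : Finset (Fin (2 * k)))) :=
        (card_finpartition_univ _).symm
end

section
/- The number of noncrossing set partitions of {1, 2, ..., n} equals the Catalan number C(n) = binom(2n, n)/(n+1). -/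
/-- A set partition of `{0, ..., n-1}` is noncrossing if there are no
`a < b < c < d` with `a, c` in one block and `b, d` in a different block. -/
def IsNoncrossing {n : ℕ} (P : Finpartition (Finset.univ : Finset (Fin n))) : Prop :=
  ¬ ∃ a b c d : Fin n, a < b ∧ b < c ∧ c < d ∧
    ∃ B ∈ P.parts, ∃ B' ∈ P.parts, B ≠ B' ∧ a ∈ B ∧ c ∈ B ∧ b ∈ B' ∧ d ∈ B'

/-!
Let `a` be the least element and `M` the greatest element of the block of `a`. No block of a
noncrossing partition meets both sides of `M`, since such a block would cross the pair `{a, M}`.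
Deleting `M` therefore leaves two independent noncrossing partitions, one of the points below `M`
and one of the points above it. Both can be prescribed freely, and the original partition is
recovered by putting `M` back into the block of `a`. If `M` has `i` points below it out of `n + 1`,
this gives `C(i) * C(n - i)` partitions, so the counts satisfy the Catalan recurrence.

To allow recursion over subsets of a fixed order, a partition of `S` is encoded as an equivalence
relation on the whole order in which each element outside `S` is related only to itself.
-/

open Set
open scoped Finset

/-- An equivalence relation on a linear order is noncrossing if any two interleaved pairs
`x < y < z < w` of equivalent elements `x ~ z` and `y ~ w` lie in the same class. -/
def IsNoncrossingRel {α : Type*} [LT α] (r : Setoid α) : Prop :=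
  ∀ ⦃x y z w⦄, x < y → y < z → z < w → r x z → r y w → r x y

section Support

variable {α : Type*} {r q s : Setoid α} {S T : Set α}

/-- An equivalence relation is supported on `S` if every element outside `S` is only equivalent to
itself. Such relations encode the partitions of `S`. -/
def SupportedOn (r : Setoid α) (S : Set α) : Prop :=
  ∀ ⦃x y⦄, r x y → x ≠ y → x ∈ S

theorem SupportedOn.mem_right (hr : SupportedOn r S) {x y : α} (hxy : r x y) (hne : x ≠ y) :
    y ∈ S :=
  hr (r.symm' hxy) hne.symm

theorem SupportedOn.mono (hr : SupportedOn r S) (hST : S ⊆ T) : SupportedOn r T :=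
  fun _ _ hxy hne ↦ hST (hr hxy hne)

theorem SupportedOn.eq_bot (hr : SupportedOn r ∅) : r = ⊥ :=
  Setoid.ext fun _ _ ↦ ⟨fun hxy ↦ of_not_not (hr hxy), fun hxy ↦ hxy ▸ r.refl' _⟩

theorem supportedOn_univ (r : Setoid α) : SupportedOn r univ :=
  fun _ _ _ _ ↦ mem_univ _

/-- The restriction of an equivalence relation to `S`, made trivial off `S` so that it stays a
relation on the ambient type. -/
def restrictRel (r : Setoid α) (S : Set α) : Setoid α where
  r x y := x = y ∨ x ∈ S ∧ y ∈ S ∧ r x y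
  iseqv := by
    refine ⟨fun _ ↦ .inl rfl, ?_, ?_⟩
    · grind [r.symm']
    · grind [r.trans']

theorem restrictRel_apply {x y : α} : restrictRel r S x y ↔ x = y ∨ x ∈ S ∧ y ∈ S ∧ r x y :=
  Iff.rfl

theorem restrictRel_eq (hq : SupportedOn q S) (h : ∀ x ∈ S, ∀ y ∈ S, r x y ↔ q x y) :
    restrictRel r S = q := by
  ext x y
  rw [restrictRel_apply]
  constructor
  · rintro (rfl | ⟨hx, hy, hxy⟩)
    exacts [q.refl' x, (h x hx y hy).1 hxy]
  · intro hxy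
    refine or_iff_not_imp_left.2 fun hne ↦ ?_
    have hx := hq hxy hne
    have hy := hq.mem_right hxy hne
    exact ⟨hx, hy, (h x hx y hy).2 hxy⟩

theorem SupportedOn.restrictRel (hr : SupportedOn r S) (T : Set α) :
    SupportedOn (restrictRel r T) (S ∩ T) := by
  rintro x y (rfl | ⟨hx, -, hxy⟩) hne
  · exact absurd rfl hne
  · exact ⟨hr hxy hne, hx⟩

theorem IsNoncrossingRel.restrictRel [Preorder α] (hr : IsNoncrossingRel r) (S : Set α) :
    IsNoncrossingRel (restrictRel r S) := by
  rintro x y z w hxy hyz hzw (rfl | ⟨hx, -, hxz⟩) (rfl | ⟨hy, -, hyw⟩)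
  · exact absurd (hxy.trans hyz) (lt_irrefl _)
  · exact absurd (hxy.trans hyz) (lt_irrefl _)
  · exact absurd (hyz.trans hzw) (lt_irrefl _)
  · exact .inr ⟨hx, hy, hr hxy hyz hzw hxz hyw⟩

end Support

section Splice

variable {α : Type*} {q s r : Setoid α} {L S : Set α}

/-- The relation that agrees with `q` on `L` and with `s` on the complement of `L`, and relates no
element of `L` to an element outside `L`. -/
def spliceRel (L : Set α) (q s : Setoid α) : Setoid α where
  r x y := x ∈ L ∧ y ∈ L ∧ q x y ∨ x ∉ L ∧ y ∉ L ∧ s x y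
  iseqv := by
    refine ⟨?_, ?_, ?_⟩
    · grind [q.refl', s.refl']
    · grind [q.symm', s.symm']
    · grind [q.trans', s.trans']

theorem spliceRel_apply {x y : α} :
    spliceRel L q s x y ↔ x ∈ L ∧ y ∈ L ∧ q x y ∨ x ∉ L ∧ y ∉ L ∧ s x y :=
  Iff.rfl

theorem spliceRel_eq (hL : ∀ x y, r x y → x ∈ L → y ∈ L) (hq : ∀ x ∈ L, ∀ y ∈ L, q x y ↔ r x y)
    (hs : ∀ x ∉ L, ∀ y ∉ L, s x y ↔ r x y) : spliceRel L q s = r := by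
  ext x y
  have hL' : x ∈ L ∧ y ∈ L ∨ x ∉ L ∧ y ∉ L ∨ ¬r x y := by grind [hL x y, hL y x, r.comm' (x := x)]
  rw [spliceRel_apply]
  grind

theorem SupportedOn.spliceRel (hq : SupportedOn q S) (hs : SupportedOn s S) (L : Set α) :
    SupportedOn (spliceRel L q s) S := by
  rintro x y (⟨-, -, hxy⟩ | ⟨-, -, hxy⟩) hne
  exacts [hq hxy hne, hs hxy hne]

theorem IsNoncrossingRel.spliceRel [Preorder α] (hL : IsLowerSet L) (hq : IsNoncrossingRel q)
    (hs : IsNoncrossingRel s) : IsNoncrossingRel (spliceRel L q s) := by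
  rintro x y z w hxy hyz hzw (⟨hx, hz, hxz⟩ | ⟨hx, _, hxz⟩) (⟨hy, _, hyw⟩ | ⟨hy, _, hyw⟩)
  · exact .inl ⟨hx, hy, hq hxy hyz hzw hxz hyw⟩
  · exact absurd (hL hyz.le hz) hy
  · exact absurd (hL hxy.le hy) hx
  · exact .inr ⟨hx, hy, hs hxy hyz hzw hxz hyw⟩

end Splice

section Glue

variable {α : Type*} [LinearOrder α] {q s r : Setoid α} {S : Set α} {a M : α}

theorem SupportedOn.comap_update (hq : SupportedOn q S) (ha : a ∈ S) (hM : M ∈ S) :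
    SupportedOn (q.comap (Function.update id M a)) S := by
  intro x y hxy hne
  rw [Setoid.comap_rel] at hxy
  by_cases hxM : x = M
  · exact hxM ▸ hM
  rw [Function.update_of_ne hxM, id] at hxy
  by_cases hxy' : x = Function.update id M a y
  · have hxa : x = a := by grind [Function.update_apply]
    exact hxa ▸ ha
  · exact hq hxy hxy'

theorem IsNoncrossingRel.comap_update (haS : a ∈ lowerBounds S) (haM : a ≤ M)
    (hq : IsNoncrossingRel q) (hqS : SupportedOn q (S ∩ Iio M)) :
    IsNoncrossingRel (q.comap (Function.update id M a)) := by
  intro x y z w hxy hyz hzw hxz hyw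
  rw [Setoid.comap_rel] at *
  have hupd {u : α} (hu : u < M) : Function.update id M a u = u := Function.update_of_ne hu.ne _ _
  have hwM : w ≤ M := by
    by_contra! hMw
    have hne : Function.update id M a y ≠ w := by grind [Function.update_apply]
    rw [Function.update_of_ne hMw.ne', id] at hyw
    exact hMw.not_gt (hqS.mem_right hyw hne).2
  have hzM : z < M := hzw.trans_le hwM
  have hyM : y < M := hyz.trans hzM
  have hxM : x < M := hxy.trans hyM
  rw [hupd hxM, hupd hzM] at hxz
  rw [hupd hyM] at hyw
  rw [hupd hxM, hupd hyM]
  rcases hwM.lt_or_eq with hwM | rfl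
  · rw [hupd hwM] at hyw
    exact hq hxy hyz hzw hxz hyw
  -- Since `w = M` stands for `a`, the interleaved pairs become `a ~ y` and `x ~ z`, where `a ≤ x`.
  · rw [Function.update_self] at hyw
    have hay : q a y := q.symm' hyw
    have hax : a ≤ x := haS (hqS hxz (hxy.trans hyz).ne).1
    rcases hax.eq_or_lt with rfl | hax
    · exact hay
    · exact q.trans' (q.symm' (hq hax hxy hyz hay hxz)) hay

/-- The relation that agrees with `q` below `M` and with `s` above `M`, and in which `M` joins the
`q`-class of `a`. -/
def glueRel (a M : α) (q s : Setoid α) : Setoid α :=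
  spliceRel (Iic M) (q.comap (Function.update id M a)) s

theorem SupportedOn.glueRel (ha : a ∈ S) (hM : M ∈ S) (hq : SupportedOn q (S ∩ Iio M))
    (hs : SupportedOn s (S ∩ Ioi M)) : SupportedOn (glueRel a M q s) S :=
  ((hq.mono inter_subset_left).comap_update ha hM).spliceRel (hs.mono inter_subset_left) _

theorem IsNoncrossingRel.glueRel (haS : a ∈ lowerBounds S) (haM : a ≤ M)
    (hq : IsNoncrossingRel q) (hqS : SupportedOn q (S ∩ Iio M)) (hs : IsNoncrossingRel s) :
    IsNoncrossingRel (glueRel a M q s) :=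
  (hq.comap_update haS haM hqS).spliceRel (isLowerSet_Iic M) hs

theorem isGreatest_glueRel (haM : a ≤ M) : IsGreatest {x | glueRel a M q s a x} M := by
  constructor
  · refine .inl ⟨haM, le_rfl, ?_⟩
    have haa : Function.update id M a a = a := by grind [Function.update_apply]
    simp [Setoid.comap_rel, haa]
  · rintro x (⟨-, hx, -⟩ | ⟨ha, -⟩)
    exacts [hx, absurd haM ha]

theorem glueRel_apply_of_lt {x y : α} (hx : x < M) (hy : y < M) :
    glueRel a M q s x y ↔ q x y := by
  rw [glueRel, spliceRel_apply, Setoid.comap_rel]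
  simp [hx.le, hy.le, hx.ne, hy.ne]

theorem glueRel_apply_of_gt {x y : α} (hx : M < x) (hy : M < y) :
    glueRel a M q s x y ↔ s x y := by
  rw [glueRel, spliceRel_apply]
  simp [hx, hy]

theorem restrictRel_Iio_glueRel (hq : SupportedOn q (Iio M)) :
    restrictRel (glueRel a M q s) (Iio M) = q :=
  restrictRel_eq hq fun _ hx _ hy ↦ glueRel_apply_of_lt hx hy

theorem restrictRel_Ioi_glueRel (hs : SupportedOn s (Ioi M)) :
    restrictRel (glueRel a M q s) (Ioi M) = s :=
  restrictRel_eq hs fun _ hx _ hy ↦ glueRel_apply_of_gt hx hy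

theorem IsNoncrossingRel.le_of_isGreatest (hr : IsNoncrossingRel r) (haS : a ∈ lowerBounds S)
    (hrS : SupportedOn r S) (hM : IsGreatest {x | r a x} M) {x y : α} (hxy : r x y) (hx : x ≤ M) :
    y ≤ M := by
  by_contra! hy
  have hax : a ≤ x := haS (hrS hxy (hx.trans_lt hy).ne)
  have hrax : r a x := by
    rcases hax.eq_or_lt with rfl | hax
    · exact r.refl' a
    rcases hx.eq_or_lt with rfl | hx
    · exact hM.1
    · exact hr hax hx hy hM.1 hxy
  exact hy.not_ge (hM.2 (r.trans' hrax hxy))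

theorem restrictRel_update_iff (haS : a ∈ lowerBounds S) (hrS : SupportedOn r S)
    (hM : r a M) {x y : α} (hx : x ≤ M) (hy : y ≤ M) :
    restrictRel r (Iio M) (Function.update id M a x) (Function.update id M a y) ↔ r x y := by
  set c := Function.update id M a with hc
  have hrc (u : α) : r u (c u) := by
    rcases eq_or_ne u M with rfl | hu
    · simpa [hc] using r.symm' hM
    · simp [hc, hu]
  have hr_iff : r (c x) (c y) ↔ r x y :=
    ⟨fun h ↦ r.trans' (hrc x) (r.trans' h (r.symm' (hrc y))),
      fun h ↦ r.trans' (r.symm' (hrc x)) (r.trans' h (hrc y))⟩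
  rw [restrictRel_apply, hr_iff]
  constructor
  · rintro (h | h)
    exacts [hr_iff.1 (h ▸ r.refl' _), h.2.2]
  · intro hxy
    rcases eq_or_ne x y with rfl | hne
    · exact .inl rfl
    have hax : a ≤ x := haS (hrS hxy hne)
    have hay : a ≤ y := haS (hrS.mem_right hxy hne)
    have haM : a < M := by grind
    have hcM {u : α} (hu : u ≤ M) : c u < M := by grind [Function.update_apply]
    exact .inr ⟨hcM hx, hcM hy, hxy⟩

theorem glueRel_restrictRel (hr : IsNoncrossingRel r) (haS : a ∈ lowerBounds S)
    (hrS : SupportedOn r S) (hM : IsGreatest {x | r a x} M) :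
    glueRel a M (restrictRel r (Iio M)) (restrictRel r (Ioi M)) = r := by
  refine spliceRel_eq (fun _ _ ↦ hr.le_of_isGreatest haS hrS hM)
    (fun _ hx _ hy ↦ restrictRel_update_iff haS hrS hM.1 hx hy) fun x hx y hy ↦ ?_
  rw [restrictRel_apply]
  grind [r.refl']

end Glue

section Count

variable {α : Type*} {S : Set α} {a M : α}

/-- The noncrossing partitions of a subset `S` of a linear order, each encoded as an equivalence
relation supported on `S`. -/
def NoncrossingSetoid [LT α] (S : Set α) : Type _ :=
  {r : Setoid α // IsNoncrossingRel r ∧ SupportedOn r S}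

theorem finite_noncrossingSetoid [LT α] (hS : S.Finite) : Finite (NoncrossingSetoid S) := by
  have := hS.to_subtype
  refine Finite.of_injective (fun r : NoncrossingSetoid S ↦ {p : S × S | r.1 p.1 p.2}) ?_
  rintro ⟨q, _, hq⟩ ⟨r, _, hr⟩ heq
  have hqr : ∀ x ∈ S, ∀ y ∈ S, q x y ↔ r x y :=
    fun x hx y hy ↦ Set.ext_iff.1 heq (⟨x, hx⟩, ⟨y, hy⟩)
  refine Subtype.ext ?_
  calc
    q = restrictRel q S := (restrictRel_eq hq fun _ _ _ _ ↦ Iff.rfl).symm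
    _ = r := restrictRel_eq hr hqr

/-- A noncrossing partition of `S` in which `M` is the greatest element of the block of `a = min S`
amounts to a noncrossing partition of the points below `M` and one of the points above `M`. -/
def noncrossingSetoidEquivProd [LinearOrder α] (ha : IsLeast S a) (hM : M ∈ S) :
    {r : NoncrossingSetoid S // IsGreatest {x | r.1 a x} M} ≃
      NoncrossingSetoid (S ∩ Iio M) × NoncrossingSetoid (S ∩ Ioi M) where
  toFun r := ⟨⟨restrictRel r.1.1 (Iio M), r.1.2.1.restrictRel _, r.1.2.2.restrictRel _⟩,
    ⟨restrictRel r.1.1 (Ioi M), r.1.2.1.restrictRel _, r.1.2.2.restrictRel _⟩⟩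
  invFun p := ⟨⟨glueRel a M p.1.1 p.2.1, p.1.2.1.glueRel ha.2 (ha.2 hM) p.1.2.2 p.2.2.1,
    p.1.2.2.glueRel ha.1 hM p.2.2.2⟩, isGreatest_glueRel (ha.2 hM)⟩
  left_inv r := Subtype.ext <| Subtype.ext <| glueRel_restrictRel r.1.2.1 ha.2 r.1.2.2 r.2
  right_inv p := Prod.ext
    (Subtype.ext <| restrictRel_Iio_glueRel <| p.1.2.2.mono inter_subset_right)
    (Subtype.ext <| restrictRel_Ioi_glueRel <| p.2.2.2.mono inter_subset_right)

theorem SupportedOn.exists_isGreatest [LinearOrder α] {r : Setoid α} (hr : SupportedOn r S)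
    (hS : S.Finite) (ha : a ∈ S) : ∃ M ∈ S, IsGreatest {x | r a x} M := by
  have hsub : {x | r a x} ⊆ S := fun x hx ↦ by
    rcases eq_or_ne a x with rfl | hne
    exacts [ha, hr.mem_right hx hne]
  obtain ⟨M, hM⟩ := (hS.subset hsub).exists_maximal ⟨a, r.refl' a⟩
  exact ⟨M, hsub hM.prop, maximal_iff_isGreatest.1 hM⟩

instance [Preorder α] : Unique (NoncrossingSetoid (∅ : Set α)) where
  default := ⟨⊥, by
    rintro x y z w hxy hyz - (rfl : x = z)
    exact absurd (hxy.trans hyz) (lt_irrefl x), fun _ _ hxy hne ↦ absurd hxy hne⟩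
  uniq r := Subtype.ext r.2.2.eq_bot

theorem card_noncrossingSetoid_eq_sum [LinearOrder α] {S : Finset α} (ha : IsLeast (S : Set α) a) :
    Nat.card (NoncrossingSetoid (S : Set α)) = ∑ M ∈ S,
      Nat.card (NoncrossingSetoid (S ∩ Iio M : Set α)) *
        Nat.card (NoncrossingSetoid (S ∩ Ioi M : Set α)) := by
  have := finite_noncrossingSetoid S.finite_toSet
  let forget (p : Σ M : S, {r : NoncrossingSetoid (S : Set α) // IsGreatest {x | r.1 a x} M}) :
      NoncrossingSetoid (S : Set α) := p.2.1
  have hforget : Function.Bijective forget := by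
    constructor
    · rintro ⟨M, r, hM⟩ ⟨M', r', hM'⟩ (rfl : r = r')
      obtain rfl : M = M' := Subtype.ext (hM.unique hM')
      rfl
    · intro r
      obtain ⟨M, hMS, hM⟩ := r.2.2.exists_isGreatest S.finite_toSet ha.1
      exact ⟨⟨⟨M, hMS⟩, r, hM⟩, rfl⟩
  rw [← Nat.card_congr (Equiv.ofBijective forget hforget), Nat.card_sigma, Finset.univ_eq_attach,
    ← S.sum_attach]
  refine Finset.sum_congr rfl fun M _ ↦ ?_
  rw [Nat.card_congr (noncrossingSetoidEquivProd ha M.2), Nat.card_prod]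

theorem sum_apply_card_filter_lt [LinearOrder α] {N : Type*} [AddCommMonoid N] (S : Finset α)
    (f : ℕ → N) : ∑ M ∈ S, f #{x ∈ S | x < M} = ∑ i ∈ Finset.range #S, f i := by
  induction S using Finset.induction_on_max with
  | empty => simp
  | insert b S hb ih =>
    have hbS : b ∉ S := fun h ↦ (hb b h).false
    rw [Finset.sum_insert hbS, Finset.card_insert_of_notMem hbS, Finset.sum_range_succ, add_comm,
      ← ih]
    congr 1
    · refine Finset.sum_congr rfl fun M hM ↦ ?_
      rw [Finset.filter_insert, if_neg (hb M hM).not_gt]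
    · rw [Finset.filter_insert, if_neg (lt_irrefl b), Finset.filter_true_of_mem hb]

theorem card_filter_gt_of_mem [LinearOrder α] {S : Finset α} (hM : M ∈ S) :
    #{x ∈ S | M < x} = #S - 1 - #{x ∈ S | x < M} := by
  have hnot_lt : #{x ∈ S | ¬x < M} = #{x ∈ S | M < x} + 1 := by
    rw [← Finset.card_insert_of_notMem (a := M) (by simp)]
    congr 1
    grind
  have := S.card_filter_add_card_filter_not (· < M)
  omega

theorem card_noncrossingSetoid [LinearOrder α] (S : Finset α) :
    Nat.card (NoncrossingSetoid (S : Set α)) = catalan #S := by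
  induction S using Finset.strongInduction with
  | H S ih =>
  rcases S.eq_empty_or_nonempty with rfl | hS
  · rw [Finset.card_empty, catalan_zero, Finset.coe_empty, Nat.card_unique]
  obtain ⟨n, hn⟩ : ∃ n, #S = n + 1 := Nat.exists_eq_succ_of_ne_zero hS.card_ne_zero
  have hbelow (M : α) (hM : M ∈ S) :
      Nat.card (NoncrossingSetoid (S ∩ Iio M : Set α)) = catalan #{x ∈ S | x < M} := by
    rw [← ih {x ∈ S | x < M} (Finset.filter_ssubset.2 ⟨M, hM, lt_irrefl M⟩), Finset.coe_filter]
    rfl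
  have habove (M : α) (hM : M ∈ S) :
      Nat.card (NoncrossingSetoid (S ∩ Ioi M : Set α)) = catalan (n - #{x ∈ S | x < M}) := by
    have hcard : #{x ∈ S | M < x} = n - #{x ∈ S | x < M} := by
      rw [card_filter_gt_of_mem hM, hn, Nat.add_sub_cancel]
    rw [← hcard, ← ih _ (Finset.filter_ssubset.2 ⟨M, hM, lt_irrefl M⟩), Finset.coe_filter]
    rfl
  calc
    Nat.card (NoncrossingSetoid (S : Set α))
      = ∑ M ∈ S, catalan #{x ∈ S | x < M} * catalan (n - #{x ∈ S | x < M}) := by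
        rw [card_noncrossingSetoid_eq_sum (S.isLeast_min' hS)]
        exact Finset.sum_congr rfl fun M hM ↦ by rw [hbelow M hM, habove M hM]
    _ = ∑ i ∈ Finset.range (n + 1), catalan i * catalan (n - i) := by
        rw [sum_apply_card_filter_lt S fun i ↦ catalan i * catalan (n - i), hn]
    _ = catalan #S := by rw [hn, catalan_succ, Finset.sum_range]

end Count

section Finpartition

variable {α : Type*} [Fintype α] [DecidableEq α]

theorem parts_eq_image_part (P : Finpartition (Finset.univ : Finset α)) :
    P.parts = Finset.univ.image P.part := by
  ext B
  rw [Finset.mem_image]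
  constructor
  · intro hB
    obtain ⟨x, -, hx⟩ := P.part_surjOn hB
    exact ⟨x, Finset.mem_univ x, hx⟩
  · rintro ⟨x, hx, rfl⟩
    exact P.part_mem.2 hx

theorem ker_part_iff_mem_part (P : Finpartition (Finset.univ : Finset α)) (x y : α) :
    Setoid.ker P.part x y ↔ x ∈ P.part y :=
  (P.mem_part_iff_part_eq_part (Finset.mem_univ x) (Finset.mem_univ y)).symm

theorem ker_part_injective :
    Function.Injective fun P : Finpartition (Finset.univ : Finset α) ↦ Setoid.ker P.part := by
  intro P Q (hPQ : Setoid.ker P.part = Setoid.ker Q.part)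
  have hpart : P.part = Q.part := by
    ext y x
    rw [← ker_part_iff_mem_part, ← ker_part_iff_mem_part, hPQ]
  exact Finpartition.ext <| by rw [parts_eq_image_part, parts_eq_image_part, hpart]

theorem ker_part_surjective :
    Function.Surjective fun P : Finpartition (Finset.univ : Finset α) ↦ Setoid.ker P.part := by
  classical
  refine fun r ↦ ⟨Finpartition.ofSetoid r, Setoid.ext fun x y ↦ ?_⟩
  rw [ker_part_iff_mem_part, Finpartition.mem_part_ofSetoid_iff_rel, r.comm']

/-- A partition of a finite type as the equivalence relation of lying in the same part. -/
noncomputable def finpartitionEquivSetoid (α : Type*) [Fintype α] [DecidableEq α] :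
    Finpartition (Finset.univ : Finset α) ≃ Setoid α :=
  Equiv.ofBijective (fun P ↦ Setoid.ker P.part) ⟨ker_part_injective, ker_part_surjective⟩

theorem isNoncrossing_iff_isNoncrossingRel {n : ℕ}
    (P : Finpartition (Finset.univ : Finset (Fin n))) :
    IsNoncrossing P ↔ IsNoncrossingRel (finpartitionEquivSetoid (Fin n) P) := by
  have hpart (i : Fin n) : P.part i ∈ P.parts := P.part_mem.2 (Finset.mem_univ i)
  have hmem (i : Fin n) : i ∈ P.part i := P.mem_part (Finset.mem_univ i)
  constructor
  · intro hP x y z w hxy hyz hzw (hxz : P.part x = P.part z) (hyw : P.part y = P.part w)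
    by_contra hne
    exact hP ⟨x, y, z, w, hxy, hyz, hzw, P.part x, hpart x, P.part y, hpart y, hne, hmem x,
      hxz ▸ hmem z, hmem y, hyw ▸ hmem w⟩
  · rintro hP ⟨x, y, z, w, hxy, hyz, hzw, B, hB, B', hB', hne, hx, hz, hy, hw⟩
    have hxB := P.part_eq_of_mem hB hx
    have hyB' := P.part_eq_of_mem hB' hy
    have hxz : P.part x = P.part z := hxB.trans (P.part_eq_of_mem hB hz).symm
    have hyw : P.part y = P.part w := hyB'.trans (P.part_eq_of_mem hB' hw).symm
    have hxy : P.part x = P.part y := hP hxy hyz hzw hxz hyw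
    exact hne (hxB.symm.trans (hxy.trans hyB'))

end Finpartition

/-- The number of noncrossing set partitions of an `n`-element set equals the `n`-th
Catalan number. -/
theorem card_noncrossing_partitions (n : ℕ) :
    Nat.card {P : Finpartition (Finset.univ : Finset (Fin n)) // IsNoncrossing P} =
    catalan n := by
  calc
    _ = Nat.card (NoncrossingSetoid ((Finset.univ : Finset (Fin n)) : Set (Fin n))) :=
      Nat.card_congr <| (finpartitionEquivSetoid (Fin n)).subtypeEquiv fun P ↦ by
        simp [supportedOn_univ, isNoncrossing_iff_isNoncrossingRel]
    _ = catalan n := by rw [card_noncrossingSetoid, Finset.card_fin]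
end
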